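/- Flat-background case of the isomorphism theorem for the conformal vector Laplacian: let n ≥ 3 and let δ be a real number with −n/2 < δ < n/2 − 2. (a) If Y : ℝ^n → ℝ^n is a smooth vector field with ∫_{ℝ^n} ‖Y(x)‖² (1+‖x‖²)^δ dx < ∞ satisfying Δ_conf Y = 0 on ℝ^n, then Y ≡ 0. (b) For every smooth compactly supported vector field f : ℝ^n → ℝ^n there exists a unique smooth vector field Y with ∫_{ℝ^n} ‖Y(x)‖² (1+‖x‖²)^δ dx < ∞ such that Δ_conf Y = f on ℝ^n. -/

import Mathlib

/-! Write `α = 1 - 2/n` and `β = α/(1+α)`. On smooth fields the operator is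
`Δ_conf Y = ΔY + α ∇ div Y` (`confLap_eq`).

*Uniqueness.* Taking the divergence of `Δ_conf Y = 0` gives `(1+α) Δ div Y = 0`, so `div Y` is
harmonic and every component of `Y` is biharmonic. For a biharmonic function `u`, the averages
over balls of radius `R` about a point `x`, taken with a kernel `(1 - ‖y‖²)₊ᵏ`, are of the form
`a + b R²` with `a` a positive multiple of `u x`: the `R`-derivative is a multiple of `R` times the
average of `Δ u` with the next kernel (`hasDerivAt_avg`). By Cauchy-Schwarz the weighted `L²` bound
with `-n/2 < δ` makes these averages tend to `0` as `R → ∞` (`tendsto_avg`), hence `a = b = 0` and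
`u x = 0` (`eq_zero_of_biharmonic`).

*Existence.* Let `pot g` be the convolution of `g` with `‖x‖^(2-n)`; then `Δ (pot g)` is a nonzero
constant multiple `mass` of `g` (`lap_pot`), which is proved by regularising the kernel. The
function `S = ∑ⱼ (xⱼ pot fⱼ - pot (yⱼ fⱼ))` satisfies `ΔS = 2 div (pot f)`, so that
`Yᵢ = mass⁻¹ (pot fᵢ - (β/2) ∂ᵢ S)` solves `Δ_conf Y = f` (`sol_eq`) without any biharmonic
kernel, whose shape would depend on the dimension. Both terms are `O(‖x‖^(2-n))`: for the second
one this uses that derivatives of compactly supported functions have mean zero, which gains one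
power of decay and absorbs the factor `xⱼ` (`dec_coord_mul_pot_pd`). A field with this decay is
square-integrable against `(1+‖x‖²)^δ` since `δ < n/2 - 2` (`integrable_of_dec`).
-/

open MeasureTheory

/-- The flat conformal Killing operator: `(𝕃Y)ᵢⱼ = ∂ᵢYʲ + ∂ⱼYⁱ - (2/n)(div Y) δᵢⱼ`. -/
noncomputable def confKill (n : ℕ)
    (Y : EuclideanSpace ℝ (Fin n) → EuclideanSpace ℝ (Fin n))
    (x : EuclideanSpace ℝ (Fin n)) (i j : Fin n) : ℝ :=
  fderiv ℝ Y x (EuclideanSpace.single i (1 : ℝ)) j +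
    fderiv ℝ Y x (EuclideanSpace.single j (1 : ℝ)) i -
    (2 / (n : ℝ)) *
      (∑ k : Fin n, fderiv ℝ Y x (EuclideanSpace.single k (1 : ℝ)) k) *
      (if i = j then 1 else 0)

/-- The flat conformal vector Laplacian: `(Δ_conf Y)ₖ = Σⱼ ∂ⱼ (𝕃Y)ⱼₖ`. -/
noncomputable def confLap (n : ℕ)
    (Y : EuclideanSpace ℝ (Fin n) → EuclideanSpace ℝ (Fin n))
    (x : EuclideanSpace ℝ (Fin n)) (k : Fin n) : ℝ :=
  ∑ j : Fin n, fderiv ℝ (fun y => confKill n Y y j k) x (EuclideanSpace.single j (1 : ℝ))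

/-! ### Partial derivatives of scalar functions -/

namespace ConfLap

open Set Filter Topology

/-- Euclidean `n`-space. -/
abbrev Sp (n : ℕ) := EuclideanSpace ℝ (Fin n)

variable {n : ℕ}

/-- The `i`-th partial derivative of a scalar function (junk value `0` where `u` is not
differentiable). -/
noncomputable def pd (i : Fin n) (u : Sp n → ℝ) : Sp n → ℝ :=
  fun x => fderiv ℝ u x (EuclideanSpace.single i (1 : ℝ))

/-- The scalar Laplacian `∑ᵢ ∂ᵢ∂ᵢ u`. -/
noncomputable def lap (u : Sp n → ℝ) : Sp n → ℝ := fun x => ∑ i, pd i (pd i u) x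

/-- Smoothness (`C^∞`) of a scalar function. -/
abbrev Sm (u : Sp n → ℝ) : Prop := ContDiff ℝ (⊤ : ℕ∞) u

lemma Sm.diff {u : Sp n → ℝ} (h : Sm u) : Differentiable ℝ u :=
  h.differentiable (by simp)

lemma Sm.pd {u : Sp n → ℝ} (h : Sm u) (i : Fin n) : Sm (pd i u) := by
  have : ContDiff ℝ (⊤ : ℕ∞) (fderiv ℝ u) := h.fderiv_right (by simp)
  exact this.clm_apply contDiff_const

lemma Sm.lap {u : Sp n → ℝ} (h : Sm u) : Sm (lap u) :=
  ContDiff.sum fun i _ => (h.pd i).pd i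

lemma sm_coord (j : Fin n) : Sm (fun x : Sp n => x j) :=
  (EuclideanSpace.proj j : Sp n →L[ℝ] ℝ).contDiff

lemma pd_add {u v : Sp n → ℝ} (hu : Sm u) (hv : Sm v) (i : Fin n) :
    pd i (fun x => u x + v x) = fun x => pd i u x + pd i v x := by
  ext x
  simp [pd, fderiv_fun_add (hu.diff x) (hv.diff x)]

lemma pd_sub {u v : Sp n → ℝ} (hu : Sm u) (hv : Sm v) (i : Fin n) :
    pd i (fun x => u x - v x) = fun x => pd i u x - pd i v x := by
  ext x
  simp [pd, fderiv_fun_sub (hu.diff x) (hv.diff x)]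

lemma pd_smul {u : Sp n → ℝ} (hu : Sm u) (c : ℝ) (i : Fin n) :
    pd i (fun x => c * u x) = fun x => c * pd i u x := by
  ext x
  simp [pd, fderiv_const_mul (hu.diff x)]

lemma pd_sum {ι : Type*} {s : Finset ι} {u : ι → Sp n → ℝ} (hu : ∀ j, Sm (u j)) (i : Fin n) :
    pd i (fun x => ∑ j ∈ s, u j x) = fun x => ∑ j ∈ s, pd i (u j) x := by
  ext x
  simp only [pd]
  rw [fderiv_fun_sum fun j _ => (hu j).diff x]
  simp

lemma pd_mul {u v : Sp n → ℝ} (hu : Sm u) (hv : Sm v) (i : Fin n) :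
    pd i (fun x => u x * v x) = fun x => u x * pd i v x + pd i u x * v x := by
  ext x
  simp [pd, fderiv_fun_mul (hu.diff x) (hv.diff x), mul_comm]

lemma pd_coord (i j : Fin n) :
    pd i (fun x : Sp n => x j) = fun _ => if i = j then 1 else 0 := by
  ext x
  have : HasFDerivAt (fun x : Sp n => x j) (EuclideanSpace.proj j : Sp n →L[ℝ] ℝ) x :=
    (EuclideanSpace.proj j : Sp n →L[ℝ] ℝ).hasFDerivAt
  simp [pd, this.fderiv, eq_comm]

lemma pd_const (i : Fin n) (c : ℝ) : pd i (fun _ : Sp n => c) = fun _ => 0 := by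
  ext x
  simp [pd]

lemma pd_comm {u : Sp n → ℝ} (hu : Sm u) (i j : Fin n) : pd i (pd j u) = pd j (pd i u) := by
  ext x
  have hd : Differentiable ℝ (fderiv ℝ u) :=
    (hu.fderiv_right (m := (⊤ : ℕ∞)) (by simp)).differentiable (by simp)
  have hs : IsSymmSndFDerivAt ℝ u x :=
    hu.contDiffAt.isSymmSndFDerivAt (by simp; exact WithTop.coe_le_coe.2 le_top)
  have key : ∀ a b : Fin n, pd a (pd b u) x = fderiv ℝ (fderiv ℝ u) x
      (EuclideanSpace.single a 1) (EuclideanSpace.single b 1) := by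
    intro a b
    change fderiv ℝ (fun y => fderiv ℝ u y (EuclideanSpace.single b 1)) x _ = _
    rw [fderiv_clm_apply (hd x) (differentiableAt_const _)]
    simp
  rw [key, key, hs.eq]

lemma lap_add {u v : Sp n → ℝ} (hu : Sm u) (hv : Sm v) :
    lap (fun x => u x + v x) = fun x => lap u x + lap v x := by
  ext x
  simp only [lap, ← Finset.sum_add_distrib]
  refine Finset.sum_congr rfl fun i _ => ?_
  rw [pd_add hu hv, pd_add (hu.pd i) (hv.pd i)]

lemma lap_sub {u v : Sp n → ℝ} (hu : Sm u) (hv : Sm v) :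
    lap (fun x => u x - v x) = fun x => lap u x - lap v x := by
  ext x
  simp only [lap, ← Finset.sum_sub_distrib]
  refine Finset.sum_congr rfl fun i _ => ?_
  rw [pd_sub hu hv, pd_sub (hu.pd i) (hv.pd i)]

lemma lap_smul {u : Sp n → ℝ} (hu : Sm u) (c : ℝ) :
    lap (fun x => c * u x) = fun x => c * lap u x := by
  ext x
  simp only [lap, Finset.mul_sum]
  refine Finset.sum_congr rfl fun i _ => ?_
  rw [pd_smul hu, pd_smul (hu.pd i)]

lemma lap_sum {ι : Type*} {s : Finset ι} {u : ι → Sp n → ℝ} (hu : ∀ j, Sm (u j)) :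
    lap (fun x => ∑ j ∈ s, u j x) = fun x => ∑ j ∈ s, lap (u j) x := by
  ext x
  simp only [lap]
  rw [Finset.sum_comm]
  refine Finset.sum_congr rfl fun i _ => ?_
  rw [pd_sum hu, pd_sum fun j => (hu j).pd i]

lemma lap_pd {u : Sp n → ℝ} (hu : Sm u) (k : Fin n) : lap (pd k u) = pd k (lap u) := by
  have h : pd k (lap u) = fun x => ∑ i, pd k (pd i (pd i u)) x :=
    pd_sum (fun i => (hu.pd i).pd i) k
  rw [h]
  ext x
  refine Finset.sum_congr rfl fun i _ => ?_
  rw [pd_comm hu i k, pd_comm (hu.pd i) i k]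

lemma lap_coord_mul {u : Sp n → ℝ} (hu : Sm u) (j : Fin n) :
    lap (fun x => x j * u x) = fun x => x j * lap u x + 2 * pd j u x := by
  ext x
  have h : ∀ i, pd i (pd i (fun x => x j * u x)) x
      = x j * pd i (pd i u) x + 2 * (if i = j then pd i u x else 0) := by
    intro i
    rw [pd_mul (sm_coord j) hu, pd_coord,
      pd_add ((sm_coord j).mul (hu.pd i)) (contDiff_const.mul hu),
      pd_mul (sm_coord j) (hu.pd i), pd_coord, pd_smul hu]
    split_ifs <;> ring
  simp only [lap, h, Finset.sum_add_distrib, ← Finset.mul_sum]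
  simp

/-! ### The conformal vector Laplacian in terms of the scalar one -/

lemma sm_comp {Y : Sp n → Sp n} (hY : ContDiff ℝ (⊤ : ℕ∞) Y) (k : Fin n) :
    Sm (fun x => Y x k) :=
  (EuclideanSpace.proj k : Sp n →L[ℝ] ℝ).contDiff.comp hY

lemma fderiv_comp {Y : Sp n → Sp n} (hY : ContDiff ℝ (⊤ : ℕ∞) Y) (x : Sp n) (i k : Fin n) :
    fderiv ℝ Y x (EuclideanSpace.single i (1 : ℝ)) k = pd i (fun y => Y y k) x := by
  have h1 : HasFDerivAt Y (fderiv ℝ Y x) x := (hY.differentiable (by simp) x).hasFDerivAt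
  have h2 : HasFDerivAt (fun y => Y y k)
      ((EuclideanSpace.proj k : Sp n →L[ℝ] ℝ).comp (fderiv ℝ Y x)) x :=
    (EuclideanSpace.proj k : Sp n →L[ℝ] ℝ).hasFDerivAt.comp x h1
  simp [pd, h2.fderiv]

/-- `Δ_conf Y = Δ Y + (1 - 2/n) ∇ div Y`, componentwise. -/
lemma confLap_eq {Y : Sp n → Sp n} (hY : ContDiff ℝ (⊤ : ℕ∞) Y) (x : Sp n) (k : Fin n) :
    confLap n Y x k = lap (fun y => Y y k) x
      + (1 - 2 / (n : ℝ)) * pd k (fun y => ∑ l, pd l (fun z => Y z l) y) x := by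
  have hs := sm_comp hY
  have hdiv : Sm (fun y => ∑ l, pd l (fun z => Y z l) y) := ContDiff.sum fun l _ => (hs l).pd l
  have h : ∀ j, fderiv ℝ (fun y => confKill n Y y j k) x (EuclideanSpace.single j (1 : ℝ))
      = pd j (pd j (fun y => Y y k)) x + pd k (pd j (fun y => Y y j)) x
        - (2 / (n : ℝ)) * (if j = k then pd j (fun y => ∑ l, pd l (fun z => Y z l) y) x else 0)
      := by
    intro j
    have e : (fun y => confKill n Y y j k) = fun y => (pd j (fun y => Y y k) y
        + pd k (fun y => Y y j) y)
        - (2 / (n : ℝ) * (if j = k then 1 else 0)) * (∑ l, pd l (fun z => Y z l) y) := by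
      ext y
      simp only [confKill, fderiv_comp hY]
      ring
    change pd j _ x = _
    rw [e, pd_sub (((hs k).pd j).add ((hs j).pd k)) (contDiff_const.mul hdiv),
      pd_add ((hs k).pd j) ((hs j).pd k), pd_smul hdiv, pd_comm (hs j) j k]
    split_ifs <;> ring
  simp only [confLap, h, Finset.sum_sub_distrib, Finset.sum_add_distrib, ← Finset.mul_sum]
  simp only [lap, Finset.sum_ite_eq', Finset.mem_univ, if_true]
  rw [pd_sum fun l => (hs l).pd l]
  ring

/-- The components of a solution of `Δ_conf Y = 0` are biharmonic: taking the divergence shows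
that `div Y` is harmonic, and then `Δ Y = -(1 - 2/n) ∇ div Y` is harmonic as well. -/
lemma biharmonic_of_confLap_eq_zero (hn : 3 ≤ n) {Y : Sp n → Sp n}
    (hY : ContDiff ℝ (⊤ : ℕ∞) Y) (h0 : ∀ x k, confLap n Y x k = 0) (k : Fin n) (x : Sp n) :
    lap (lap (fun y => Y y k)) x = 0 := by
  have hs := sm_comp hY
  set d : Sp n → ℝ := fun y => ∑ l, pd l (fun z => Y z l) y with hd
  have hdiv : Sm d := ContDiff.sum fun l _ => (hs l).pd l
  have hn' : (3 : ℝ) ≤ n := by exact_mod_cast hn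
  have e : ∀ k, lap (fun y => Y y k) = fun x => -(1 - 2 / (n : ℝ)) * pd k d x := by
    intro k
    ext x
    have := h0 x k
    rw [confLap_eq hY] at this
    linarith
  have hh : ∀ x, lap d x = 0 := by
    intro x
    have e1 : lap d x = ∑ l, pd l (lap (fun z => Y z l)) x := by
      rw [hd, lap_sum fun l => (hs l).pd l]
      refine Finset.sum_congr rfl fun l _ => ?_
      rw [lap_pd (hs l)]
    have e2 : ∀ l, pd l (lap (fun z => Y z l)) x = -(1 - 2 / (n : ℝ)) * pd l (pd l d) x := by
      intro l
      rw [e l, pd_smul (hdiv.pd l)]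
    simp only [e2, ← Finset.mul_sum] at e1
    change lap d x = _ * lap d x at e1
    have h2 : (2 - 2 / (n : ℝ)) * lap d x = 0 := by linarith
    have h3 : 2 / (n : ℝ) ≤ 1 := by rw [div_le_one (by linarith)]; linarith
    rcases mul_eq_zero.1 h2 with h | h
    · linarith
    · exact h
  have hz : lap d = fun _ => 0 := funext hh
  rw [e k, lap_smul (hdiv.pd k), lap_pd hdiv, hz, pd_const]
  simp

/-! ### A Liouville theorem for biharmonic functions -/

open MeasureTheory

/-- Integration by parts against a compactly supported function. -/
lemma integral_mul_pd {f g : Sp n → ℝ} (hf : ContDiff ℝ 1 f) (hg : ContDiff ℝ 1 g)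
    (hc : HasCompactSupport g) (i : Fin n) :
    ∫ x, f x * pd i g x = - ∫ x, pd i f x * g x := by
  have cf : Continuous (pd i f) := (hf.continuous_fderiv one_ne_zero).clm_apply continuous_const
  have cg : Continuous (pd i g) := (hg.continuous_fderiv one_ne_zero).clm_apply continuous_const
  have cpg : HasCompactSupport (pd i g) := hc.fderiv_apply ℝ _
  refine integral_mul_fderiv_eq_neg_fderiv_mul_of_integrable ?_ ?_ ?_
    (fun x _ => hf.differentiable one_ne_zero x) (fun x _ => hg.differentiable one_ne_zero x)
  · exact (cf.mul hg.continuous).integrable_of_hasCompactSupport hc.mul_left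
  · exact (hf.continuous.mul cg).integrable_of_hasCompactSupport cpg.mul_left
  · exact (hf.continuous.mul hg.continuous).integrable_of_hasCompactSupport hc.mul_left

lemma fderiv_eq_sum (u : Sp n → ℝ) (z y : Sp n) : fderiv ℝ u z y = ∑ i, y i * pd i u z := by
  have h : y = ∑ i, y i • EuclideanSpace.single i (1 : ℝ) := by
    ext j
    simp [Pi.single_apply]
  conv_lhs => rw [h]
  simp [pd]

/-- The truncated powers `(1 - ‖y‖²)₊ ^ k`: radial averaging kernels supported in the unit ball,
each of which is, up to a constant and the factor `yᵢ`, the `i`-th derivative of the next one. -/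
noncomputable def bmp (k : ℕ) (y : Sp n) : ℝ := max (1 - ‖y‖ ^ 2) 0 ^ k

lemma hasDerivAt_max_pow (k : ℕ) (s : ℝ) :
    HasDerivAt (fun s : ℝ => max s 0 ^ (k + 2)) ((k + 2) * max s 0 ^ (k + 1)) s := by
  rcases lt_trichotomy s 0 with h | h | h
  · have : (fun s : ℝ => max s 0 ^ (k + 2)) =ᶠ[𝓝 s] fun _ => 0 := by
      filter_upwards [gt_mem_nhds h] with t ht
      simp [max_eq_right (le_of_lt ht)]
    rw [max_eq_right h.le]
    simpa using (hasDerivAt_const s (0 : ℝ)).congr_of_eventuallyEq this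
  · subst h
    rw [hasDerivAt_iff_isLittleO]
    simp only [max_self, ne_eq, Nat.add_eq_zero_iff, OfNat.ofNat_ne_zero, and_false,
      not_false_eq_true, zero_pow, sub_zero, one_ne_zero, mul_zero, smul_zero]
    refine Asymptotics.IsBigO.trans_isLittleO (g := fun s : ℝ => s ^ (k + 2)) ?_
      (Asymptotics.isLittleO_pow_id (by omega))
    refine Asymptotics.IsBigO.of_bound 1 (Eventually.of_forall fun s => ?_)
    rw [one_mul, norm_pow, norm_pow]
    refine pow_le_pow_left₀ (norm_nonneg _) ?_ _
    rw [Real.norm_eq_abs, Real.norm_eq_abs, abs_of_nonneg (le_max_right _ _)]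
    exact max_le (le_abs_self s) (abs_nonneg s)
  · have : (fun s : ℝ => max s 0 ^ (k + 2)) =ᶠ[𝓝 s] fun s => s ^ (k + 2) := by
      filter_upwards [lt_mem_nhds h] with t ht
      simp [max_eq_left (le_of_lt ht)]
    rw [max_eq_left h.le]
    simpa using (hasDerivAt_pow (k + 2) s).congr_of_eventuallyEq this

lemma contDiff_bmp (k : ℕ) : ContDiff ℝ 1 (bmp (n := n) (k + 2)) := by
  have h : ContDiff ℝ 1 (fun s : ℝ => max s 0 ^ (k + 2)) := by
    rw [contDiff_one_iff_deriv]
    refine ⟨fun s => (hasDerivAt_max_pow k s).differentiableAt, ?_⟩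
    rw [show deriv (fun s : ℝ => max s 0 ^ (k + 2)) =
        fun s : ℝ => ((k : ℝ) + 2) * max s 0 ^ (k + 1) from
      funext fun s => (hasDerivAt_max_pow k s).deriv]
    fun_prop
  exact h.comp (contDiff_const.sub (contDiff_norm_sq ℝ))

lemma continuous_bmp (k : ℕ) : Continuous (bmp (n := n) k) := by
  unfold bmp
  fun_prop

lemma bmp_nonneg (k : ℕ) (y : Sp n) : 0 ≤ bmp k y := pow_nonneg (le_max_right _ _) _

lemma bmp_le_one (k : ℕ) (y : Sp n) : bmp k y ≤ 1 :=
  pow_le_one₀ (le_max_right _ _) (max_le (by nlinarith [sq_nonneg ‖y‖]) zero_le_one)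

lemma bmp_eq_zero (k : ℕ) {y : Sp n} (hy : y ∉ Metric.closedBall (0 : Sp n) 1) :
    bmp (k + 1) y = 0 := by
  have : 1 < ‖y‖ := by simpa using hy
  simp [bmp, max_eq_right (show 1 - ‖y‖ ^ 2 ≤ 0 by nlinarith)]

lemma hasCompactSupport_bmp (k : ℕ) : HasCompactSupport (bmp (n := n) (k + 1)) :=
  HasCompactSupport.intro (isCompact_closedBall 0 1) fun _ hy => bmp_eq_zero k hy

lemma pd_bmp (k : ℕ) (i : Fin n) (y : Sp n) :
    pd i (bmp (k + 2)) y = -(2 * (k + 2)) * (y i * bmp (k + 1) y) := by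
  have h1 : HasFDerivAt (fun y : Sp n => 1 - ‖y‖ ^ 2) (-(2 • innerSL ℝ y)) y := by
    simpa using (hasStrictFDerivAt_norm_sq y).hasFDerivAt.const_sub 1
  have h2 : HasFDerivAt (bmp (k + 2)) _ y := (hasDerivAt_max_pow k _).comp_hasFDerivAt y h1
  rw [pd, h2.fderiv]
  simp [bmp, EuclideanSpace.inner_single_right]
  ring

/-- The (unnormalised) average of `u` over the ball of radius `R` about `x`, weighted by a truncated
power. -/
noncomputable def avg (k : ℕ) (u : Sp n → ℝ) (x : Sp n) (R : ℝ) : ℝ :=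
  ∫ y, u (x + R • y) * bmp k y

lemma pd_comp_affine {v : Sp n → ℝ} (hv : Sm v) (x : Sp n) (R : ℝ) (i : Fin n) (y : Sp n) :
    pd i (fun y => v (x + R • y)) y = R * pd i v (x + R • y) := by
  have h1 : HasFDerivAt (fun y : Sp n => x + R • y) (R • ContinuousLinearMap.id ℝ (Sp n)) y :=
    ((hasFDerivAt_id y).const_smul R).const_add x
  have h2 := (hv.diff (x + R • y)).hasFDerivAt.comp y h1
  rw [pd, show (fun y => v (x + R • y)) = v ∘ (fun y => x + R • y) from rfl, h2.fderiv]
  simp [pd]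

/-- The radial derivative of a weighted ball average of `u` is a multiple of `R` times a weighted
ball average of `Δ u`. -/
lemma hasDerivAt_avg (k : ℕ) {u : Sp n → ℝ} (hu : Sm u) (x : Sp n) (R : ℝ) :
    HasDerivAt (avg (k + 1) u x) (R / (2 * (k + 2)) * avg (k + 2) (lap u) x R) R := by
  have cu := hu.continuous
  have cdu : Continuous (fderiv ℝ u) := hu.continuous_fderiv (by simp)
  have hcs := hasCompactSupport_bmp (n := n) k
  have cb := continuous_bmp (n := n) (k + 1)
  set G : ℝ → Sp n → ℝ := fun R y => fderiv ℝ u (x + R • y) y * bmp (k + 1) y with hG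
  have cG : Continuous (fun p : ℝ × Sp n => G p.1 p.2) := by
    simp only [hG]
    refine Continuous.mul ?_ (cb.comp continuous_snd)
    exact (cdu.comp (by fun_prop)).clm_apply continuous_snd
  obtain ⟨C, hC⟩ := ((isCompact_closedBall R 1).prod
    (isCompact_closedBall (0 : Sp n) 1)).exists_bound_of_continuousOn cG.continuousOn
  have hder : HasDerivAt (avg (k + 1) u x) (∫ y, G R y) R := by
    refine (hasDerivAt_integral_of_dominated_loc_of_deriv_le (s := Metric.closedBall R 1)
      (bound := (Metric.closedBall (0 : Sp n) 1).indicator fun _ => C)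
      (Metric.closedBall_mem_nhds R one_pos) ?_ ?_ ?_ ?_ ?_ ?_).2
    · refine Eventually.of_forall fun r => Continuous.aestronglyMeasurable ?_
      exact (cu.comp (by fun_prop)).mul cb
    · exact Continuous.integrable_of_hasCompactSupport ((cu.comp (by fun_prop)).mul cb)
        hcs.mul_left
    · exact (cG.comp (Continuous.prodMk_right R)).aestronglyMeasurable
    · refine Eventually.of_forall fun y r hr => ?_
      by_cases hy : y ∈ Metric.closedBall (0 : Sp n) 1
      · rw [indicator_of_mem hy]
        exact hC (r, y) ⟨hr, hy⟩
      · rw [indicator_of_notMem hy]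
        simp [hG, bmp_eq_zero k hy]
    · exact (integrable_indicator_iff measurableSet_closedBall).2
        (integrableOn_const (isCompact_closedBall _ _).measure_lt_top.ne)
    · refine Eventually.of_forall fun y r _ => ?_
      have h1 : HasDerivAt (fun r : ℝ => x + r • y) y r := by
        simpa using ((hasDerivAt_id r).smul_const y).const_add x
      exact ((hu.diff (x + r • y)).hasFDerivAt.comp_hasDerivAt r h1).mul_const _
  convert hder using 1
  have hk : (2 * ((k : ℝ) + 2)) ≠ 0 := by positivity
  have haff : ∀ i, Sm (fun y => pd i u (x + R • y)) := fun i =>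
    (hu.pd i).comp (contDiff_const.add (contDiff_const_smul R))
  have hcs2 := hasCompactSupport_bmp (n := n) (k + 1)
  have e1 : ∀ y, G R y
      = ∑ i, (-(2 * ((k : ℝ) + 2))⁻¹) * (pd i u (x + R • y) * pd i (bmp (k + 2)) y) := by
    intro y
    simp only [hG, fderiv_eq_sum, Finset.sum_mul, pd_bmp]
    refine Finset.sum_congr rfl fun i _ => ?_
    field_simp
  have e2 : ∀ i, ∫ y, pd i u (x + R • y) * pd i (bmp (k + 2)) y
      = - (R * ∫ y, pd i (pd i u) (x + R • y) * bmp (k + 2) y) := by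
    intro i
    rw [integral_mul_pd ((haff i).of_le (by simp)) (contDiff_bmp k) hcs2]
    simp only [pd_comp_affine (hu.pd i), mul_assoc]
    rw [integral_const_mul]
  have e3 : avg (k + 2) (lap u) x R
      = ∑ i, ∫ y, pd i (pd i u) (x + R • y) * bmp (k + 2) y := by
    simp only [avg, lap, Finset.sum_mul]
    refine integral_finsetSum _ fun i _ => ?_
    exact Continuous.integrable_of_hasCompactSupport
      ((((hu.pd i).pd i).continuous.comp (by fun_prop)).mul (continuous_bmp _)) hcs2.mul_left
  simp only [e1]
  rw [integral_finsetSum, e3, Finset.mul_sum]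
  · refine Finset.sum_congr rfl fun i _ => ?_
    rw [integral_const_mul, e2]
    field_simp
  · intro i _
    refine Integrable.const_mul (Continuous.integrable_of_hasCompactSupport ?_ ?_) _
    · exact (haff i).continuous.mul
        (((contDiff_bmp k).continuous_fderiv one_ne_zero).clm_apply continuous_const)
    · exact (hcs2.fderiv_apply ℝ _).mul_left

/-- A biharmonic function whose weighted averages over large balls tend to zero vanishes: as a
function of the radius `R`, the average is `a + b R²` with `a` a positive multiple of `u x`. -/
lemma eq_zero_of_biharmonic {u : Sp n → ℝ} (hu : Sm u) (h0 : ∀ x, lap (lap u) x = 0) (x : Sp n)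
    (hlim : Tendsto (avg 1 u x) atTop (𝓝 0)) : u x = 0 := by
  have d2 : ∀ R, HasDerivAt (avg 2 (lap u) x) 0 R := by
    intro R
    have := hasDerivAt_avg 1 hu.lap x R
    simpa [avg, h0] using this
  set b := avg 2 (lap u) x 0 with hb
  have c2 : ∀ R, avg 2 (lap u) x R = b := fun R =>
    is_const_of_deriv_eq_zero (fun R => (d2 R).differentiableAt) (fun R => (d2 R).deriv) R 0
  have d1 : ∀ R, HasDerivAt (fun R => avg 1 u x R - b / 8 * R ^ 2) 0 R := by
    intro R
    have h := (hasDerivAt_avg 0 hu x R).sub ((hasDerivAt_pow 2 R).const_mul (b / 8))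
    simp only [zero_add, c2] at h
    refine h.congr_deriv ?_
    push_cast
    ring
  have c1 : ∀ R, avg 1 u x R = avg 1 u x 0 + b / 8 * R ^ 2 := fun R => by
    have := is_const_of_deriv_eq_zero (fun R => (d1 R).differentiableAt)
      (fun R => (d1 R).deriv) R 0
    linarith
  have hbz : b = 0 := by
    have l1 : Tendsto (fun R : ℝ => (R ^ 2)⁻¹) atTop (𝓝 0) :=
      tendsto_inv_atTop_zero.comp (tendsto_pow_atTop two_ne_zero)
    have l2 : Tendsto (fun R : ℝ => avg 1 u x R * (R ^ 2)⁻¹ - avg 1 u x 0 * (R ^ 2)⁻¹) atTop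
        (𝓝 0) := by
      simpa using (hlim.mul l1).sub (l1.const_mul (avg 1 u x 0))
    have l3 : Tendsto (fun _ : ℝ => b / 8) atTop (𝓝 0) := by
      refine l2.congr' ?_
      filter_upwards [eventually_gt_atTop 0] with R hR
      rw [c1 R]
      field_simp
      ring
    have := tendsto_nhds_unique l3 tendsto_const_nhds
    linarith
  have haz : avg 1 u x 0 = 0 := by
    have : avg 1 u x = fun _ => avg 1 u x 0 := by
      funext R
      rw [c1 R, hbz]
      simp
    rw [this] at hlim
    exact tendsto_nhds_unique tendsto_const_nhds hlim
  have hpos : 0 < ∫ y : Sp n, bmp 1 y := by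
    refine Continuous.integral_pos_of_hasCompactSupport_nonneg_nonzero (x := 0)
      (continuous_bmp 1) (hasCompactSupport_bmp 0) (bmp_nonneg 1) ?_
    simp [bmp]
  simp only [avg, zero_smul, add_zero] at haz
  rw [integral_const_mul] at haz
  exact (mul_eq_zero.1 haz).resolve_right hpos.ne'

/-- Weighted square-integrability with `δ > -n/2` forces the averages over large balls to tend to
zero. The Cauchy-Schwarz inequality is used in the form `2|u| ≤ λ u² w + λ⁻¹ w⁻¹` with `λ = R ^ κ`
and `κ` strictly between `2 max (-δ) 0` and `n`. -/
lemma tendsto_avg {δ : ℝ} (hn : 0 < n) (hδ : -(n : ℝ) / 2 < δ) {u : Sp n → ℝ}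
    (hi : Integrable (fun x => u x ^ 2 * (1 + ‖x‖ ^ 2) ^ δ)) (x : Sp n) :
    Tendsto (avg 1 u x) atTop (𝓝 0) := by
  have hn' : (0 : ℝ) < n := by exact_mod_cast hn
  set σ : ℝ := max (-δ) 0 with hσ
  have hσn : 2 * σ < n := by
    have : σ < n / 2 := max_lt (by linarith) (by linarith)
    linarith
  obtain ⟨κ, hκ1, hκ2⟩ := exists_between hσn
  set M := ∫ z, u z ^ 2 * (1 + ‖z‖ ^ 2) ^ δ with hM
  set B := ∫ y : Sp n, bmp 1 y with hB
  have hlim : Tendsto (fun R : ℝ => 1 / 2 * M * R ^ (-(n - κ)) + 1 / 2 * 5 ^ σ * B *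
      R ^ (-(κ - 2 * σ))) atTop (𝓝 0) := by
    simpa using ((tendsto_rpow_neg_atTop (sub_pos.2 hκ2)).const_mul (1 / 2 * M)).add
      ((tendsto_rpow_neg_atTop (sub_pos.2 hκ1)).const_mul (1 / 2 * 5 ^ σ * B))
  refine squeeze_zero_norm' ?_ hlim
  filter_upwards [eventually_ge_atTop (max 1 ‖x‖)] with R hR
  have hR1 : 1 ≤ R := (le_max_left _ _).trans hR
  have hRx : ‖x‖ ≤ R := (le_max_right _ _).trans hR
  have hR0 : 0 < R := by linarith
  set w : Sp n → ℝ := fun z => (1 + ‖z‖ ^ 2) ^ δ with hw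
  have hpt : ∀ y : Sp n, ‖u (x + R • y) * bmp 1 y‖ ≤
      1 / 2 * R ^ κ * (u (x + R • y) ^ 2 * w (x + R • y))
        + 1 / 2 * R ^ (-κ) * (5 * R ^ 2) ^ σ * bmp 1 y := by
    intro y
    have hwpos : 0 < w (x + R • y) := by positivity
    have hRκ : 0 < R ^ κ := Real.rpow_pos_of_pos hR0 κ
    by_cases hy : y ∈ Metric.closedBall (0 : Sp n) 1
    · have hy' : ‖y‖ ≤ 1 := by simpa using hy
      have hz : ‖x + R • y‖ ≤ 2 * R := by
        refine (norm_add_le _ _).trans ?_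
        rw [norm_smul, Real.norm_eq_abs, abs_of_pos hR0]
        nlinarith
      have hz2 : 1 + ‖x + R • y‖ ^ 2 ≤ 5 * R ^ 2 := by nlinarith [norm_nonneg (x + R • y)]
      have hwi : (w (x + R • y))⁻¹ ≤ (5 * R ^ 2) ^ σ := by
        have h1 : (1 : ℝ) ≤ 1 + ‖x + R • y‖ ^ 2 := by nlinarith [sq_nonneg ‖x + R • y‖]
        rw [hw]
        simp only
        rw [← Real.rpow_neg (by linarith)]
        exact (Real.rpow_le_rpow_of_exponent_le h1 (le_max_left _ _)).trans
          (Real.rpow_le_rpow (by linarith) hz2 (le_max_right _ _))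
      have hamgm : |u (x + R • y)| ≤ 1 / 2 * R ^ κ * (u (x + R • y) ^ 2 * w (x + R • y))
          + 1 / 2 * R ^ (-κ) * (w (x + R • y))⁻¹ := by
        rw [Real.rpow_neg hR0.le, ← sq_abs (u _)]
        set a := |u (x + R • y)|
        set p := R ^ κ * w (x + R • y) with hp
        have hp0 : 0 < p := by positivity
        have : 1 / 2 * R ^ κ * (a ^ 2 * w (x + R • y)) + 1 / 2 * (R ^ κ)⁻¹ * (w (x + R • y))⁻¹
            = 1 / 2 * (a ^ 2 * p + p⁻¹) := by
          rw [hp, mul_inv]; ring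
        rw [this]
        have h2 : a ^ 2 * p + p⁻¹ - 2 * a = (a * p - 1) ^ 2 / p := by
          field_simp
          ring
        have h3 : 0 ≤ (a * p - 1) ^ 2 / p := by positivity
        linarith
      rw [norm_mul, Real.norm_eq_abs, Real.norm_eq_abs, abs_of_nonneg (bmp_nonneg 1 y)]
      have hb0 := bmp_nonneg 1 y
      have hb1 := bmp_le_one 1 y
      calc |u (x + R • y)| * bmp 1 y
          ≤ (1 / 2 * R ^ κ * (u (x + R • y) ^ 2 * w (x + R • y))
            + 1 / 2 * R ^ (-κ) * (5 * R ^ 2) ^ σ) * bmp 1 y := by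
            refine mul_le_mul_of_nonneg_right (hamgm.trans ?_) hb0
            gcongr
        _ = 1 / 2 * R ^ κ * (u (x + R • y) ^ 2 * w (x + R • y)) * bmp 1 y
            + 1 / 2 * R ^ (-κ) * (5 * R ^ 2) ^ σ * bmp 1 y := by ring
        _ ≤ _ := by
            refine add_le_add_left ?_ _
            exact mul_le_of_le_one_right (by positivity) hb1
    · rw [bmp_eq_zero 0 hy]
      simp only [mul_zero, norm_zero, add_zero]
      positivity
  have hI1 : Integrable (fun y : Sp n => u (x + R • y) ^ 2 * w (x + R • y)) :=
    (hi.comp_add_left x).comp_smul hR0.ne'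
  have hI2 : Integrable (bmp (n := n) 1) :=
    (continuous_bmp 1).integrable_of_hasCompactSupport (hasCompactSupport_bmp 0)
  refine (norm_integral_le_of_norm_le ((hI1.const_mul _).add (hI2.const_mul _))
    (Eventually.of_forall hpt)).trans (le_of_eq ?_)
  simp only [Pi.add_apply]
  rw [integral_add (hI1.const_mul _) (hI2.const_mul _), integral_const_mul, integral_const_mul]
  have hsc : ∫ y : Sp n, u (x + R • y) ^ 2 * w (x + R • y) = (R ^ n)⁻¹ * M := by
    have h1 := Measure.integral_comp_smul (volume : Measure (Sp n))
      (fun z => u (x + z) ^ 2 * w (x + z)) R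
    rw [h1, finrank_euclideanSpace_fin, abs_of_pos (by positivity),
      integral_add_left_eq_self (fun z => u z ^ 2 * w z) x, smul_eq_mul]
  rw [hsc, Real.mul_rpow (by norm_num) (by positivity), ← hB,
    show -((n : ℝ) - κ) = κ + -(n : ℝ) by ring, Real.rpow_add hR0, Real.rpow_neg hR0.le (n : ℝ),
    Real.rpow_natCast, show -(κ - 2 * σ) = -κ + 2 * σ by ring, Real.rpow_add hR0,
    Real.rpow_mul hR0.le, Real.rpow_two]
  ring

/-- The kernel of `Δ_conf` in the weighted space is trivial. -/
lemma eq_zero_of_confLap_eq_zero (hn : 3 ≤ n) {δ : ℝ} (hδ : -(n : ℝ) / 2 < δ)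
    {Y : Sp n → Sp n} (hY : ContDiff ℝ (⊤ : ℕ∞) Y)
    (hi : Integrable (fun x => ‖Y x‖ ^ 2 * (1 + ‖x‖ ^ 2) ^ δ))
    (h0 : ∀ x k, confLap n Y x k = 0) (x : Sp n) : Y x = 0 := by
  ext k
  refine eq_zero_of_biharmonic (sm_comp hY k) (biharmonic_of_confLap_eq_zero hn hY h0 k) x
    (tendsto_avg (by omega) hδ ?_ x)
  have hw : Continuous (fun x : Sp n => (1 + ‖x‖ ^ 2) ^ δ) :=
    Continuous.rpow_const (by fun_prop) fun x => Or.inl (by positivity)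
  refine hi.mono' (((sm_comp hY k).continuous.pow 2).mul hw).aestronglyMeasurable
    (Eventually.of_forall fun x => ?_)
  have h1 : (Y x k) ^ 2 ≤ ‖Y x‖ ^ 2 := by
    rw [← sq_abs (Y x k)]
    exact pow_le_pow_left₀ (abs_nonneg _) (PiLp.norm_apply_le (Y x) k) 2
  rw [Real.norm_of_nonneg (by positivity)]
  gcongr

/-! ### The Newton potential -/

/-- The Newton kernel `‖y‖^{-(n-2)}`, without its normalising constant and with the junk value
`0⁻¹ = 0` at the origin. -/
noncomputable def newt (y : Sp n) : ℝ := (‖y‖ ^ (n - 2))⁻¹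

lemma newt_nonneg (y : Sp n) : 0 ≤ newt y := by
  unfold newt
  positivity

lemma nontrivial_sp (hn : 3 ≤ n) : Nontrivial (Sp n) :=
  Module.nontrivial_of_finrank_pos (R := ℝ) (by rw [finrank_euclideanSpace_fin]; omega)

lemma locallyIntegrable_newt (hn : 3 ≤ n) : LocallyIntegrable (newt (n := n)) := by
  have := nontrivial_sp hn
  rw [locallyIntegrable_iff]
  intro K hK
  obtain ⟨r, hr⟩ := hK.isBounded.subset_ball (0 : Sp n)
  refine IntegrableOn.mono_set ?_ hr
  refine (integrableOn_fun_norm_addHaar volume (f := fun s : ℝ => (s ^ (n - 2))⁻¹)).2 ?_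
  rw [finrank_euclideanSpace_fin]
  have h : IntegrableOn (fun s : ℝ => s) (Ioo 0 r) :=
    (continuous_id.integrableOn_Icc (a := 0) (b := r)).mono_set Ioo_subset_Icc_self
  refine h.congr_fun (fun s hs => ?_) measurableSet_Ioo
  have hs0 : s ≠ 0 := hs.1.ne'
  simp only [smul_eq_mul]
  rw [show n - 1 = (n - 2) + 1 by omega, pow_succ]
  field_simp

/-- The (unnormalised) Newton potential of `g`. -/
noncomputable def pot (g : Sp n → ℝ) : Sp n → ℝ :=
  convolution newt g (ContinuousLinearMap.lsmul ℝ ℝ) volume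

lemma pot_apply (g : Sp n → ℝ) (x : Sp n) : pot g x = ∫ y, newt y * g (x - y) := by
  simp [pot, convolution_lsmul]

lemma sm_pot (hn : 3 ≤ n) {g : Sp n → ℝ} (hg : Sm g) (hc : HasCompactSupport g) : Sm (pot g) :=
  hc.contDiff_convolution_right _ (locallyIntegrable_newt hn) hg

lemma hasCompactSupport_pd {g : Sp n → ℝ} (hc : HasCompactSupport g) (i : Fin n) :
    HasCompactSupport (pd i g) := hc.fderiv_apply ℝ _

lemma pd_pot (hn : 3 ≤ n) {g : Sp n → ℝ} (hg : Sm g) (hc : HasCompactSupport g) (i : Fin n) :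
    pd i (pot g) = pot (pd i g) := by
  ext x
  have hN := locallyIntegrable_newt hn
  have h := hc.hasFDerivAt_convolution_right (ContinuousLinearMap.lsmul ℝ ℝ) hN
    (hg.of_le (by simp)) x
  rw [pd, pot, h.fderiv, convolution_precompR_apply _ hN (hc.fderiv ℝ)
    (hg.continuous_fderiv (by simp))]
  rfl

/-- The regularised Newton kernel `(‖y‖² + t)^p`; the relevant exponent is `p = -(n-2)/2`. -/
noncomputable def reg (p t : ℝ) (y : Sp n) : ℝ := (‖y‖ ^ 2 + t) ^ p

lemma sm_reg (p : ℝ) {t : ℝ} (ht : 0 < t) : Sm (reg (n := n) p t) :=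
  ContDiff.rpow_const_of_ne ((contDiff_norm_sq ℝ).add contDiff_const)
    fun y => by positivity

lemma pd_reg (p : ℝ) {t : ℝ} (ht : 0 < t) (i : Fin n) :
    pd i (reg (n := n) p t) = fun y => 2 * p * (y i * reg (p - 1) t y) := by
  ext y
  have h1 : HasFDerivAt (fun y : Sp n => ‖y‖ ^ 2 + t) (2 • innerSL ℝ y) y :=
    (hasStrictFDerivAt_norm_sq y).hasFDerivAt.add_const t
  have h2 : HasFDerivAt (reg (n := n) p t) _ y :=
    h1.rpow_const (p := p) (Or.inl (by positivity))
  rw [pd, h2.fderiv]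
  simp [reg, EuclideanSpace.inner_single_right]
  ring

/-- With `p = -(n-2)/2` the main terms in the Laplacian cancel. -/
lemma lap_reg {p : ℝ} (hp : p = -((n : ℝ) - 2) / 2) {t : ℝ} (ht : 0 < t) (y : Sp n) :
    lap (reg p t) y = -((n : ℝ) * (n - 2)) * (t * reg (p - 2) t y) := by
  have h : ∀ i, pd i (pd i (reg (n := n) p t)) y
      = 2 * p * (reg (p - 1) t y + 2 * (p - 1) * reg (p - 2) t y * (y i) ^ 2) := by
    intro i
    rw [pd_reg p ht, pd_smul ((sm_coord i).mul (sm_reg _ ht)), pd_mul (sm_coord i) (sm_reg _ ht),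
      pd_coord, pd_reg _ ht, show p - 1 - 1 = p - 2 by ring]
    simp only [if_true]
    ring
  have hs : 0 < ‖y‖ ^ 2 + t := by positivity
  have hr : reg (p - 1) t y = reg (p - 2) t y * (‖y‖ ^ 2 + t) := by
    rw [reg, reg, show p - 1 = p - 2 + 1 by ring, Real.rpow_add_one hs.ne']
  have hy : ∑ i, (y i) ^ 2 = ‖y‖ ^ 2 := by
    rw [EuclideanSpace.norm_sq_eq]
    simp
  simp only [lap, h, ← Finset.mul_sum, Finset.sum_add_distrib, Finset.sum_const, Finset.card_univ,
    Fintype.card_fin, nsmul_eq_mul, hy, hr]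
  rw [hp]
  ring

/-- Green's second identity against a compactly supported function. -/
lemma integral_mul_lap {f h : Sp n → ℝ} (hf : Sm f) (hh : Sm h) (hc : HasCompactSupport h) :
    ∫ y, f y * lap h y = ∫ y, lap f y * h y := by
  have e : ∀ i, ∫ y, f y * pd i (pd i h) y = ∫ y, pd i (pd i f) y * h y := by
    intro i
    rw [integral_mul_pd (hf.of_le (by simp)) ((hh.pd i).of_le (by simp)) (hasCompactSupport_pd hc i),
      integral_mul_pd ((hf.pd i).of_le (by simp)) (hh.of_le (by simp)) hc, neg_neg]
  simp only [lap, Finset.mul_sum, Finset.sum_mul]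
  rw [integral_finsetSum, integral_finsetSum]
  · exact Finset.sum_congr rfl fun i _ => e i
  · intro i _
    exact (((hf.pd i).pd i).continuous.mul hh.continuous).integrable_of_hasCompactSupport
      hc.mul_left
  · intro i _
    exact (hf.continuous.mul ((hh.pd i).pd i).continuous).integrable_of_hasCompactSupport
      (hasCompactSupport_pd (hasCompactSupport_pd hc i) i).mul_left

/-- The profile whose rescalings are the Laplacians of the regularised kernels. -/
noncomputable def prof (z : Sp n) : ℝ :=
  -((n : ℝ) * (n - 2)) * (1 + ‖z‖ ^ 2) ^ (-((n : ℝ) + 2) / 2)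

/-- The total mass of `Δ ‖y‖^{-(n-2)}`. -/
noncomputable def mass (n : ℕ) : ℝ := ∫ z : Sp n, prof z

lemma integrable_prof : Integrable (prof (n := n)) := by
  refine Integrable.const_mul ?_ _
  refine integrable_rpow_neg_one_add_norm_sq (r := (n : ℝ) + 2) ?_
  rw [finrank_euclideanSpace_fin]
  linarith

lemma mass_ne_zero (hn : 3 ≤ n) : mass n ≠ 0 := by
  have hn' : (3 : ℝ) ≤ n := by exact_mod_cast hn
  have hpos : ∀ z : Sp n, 0 < -prof z := by
    intro z
    have : 0 < (n : ℝ) * (n - 2) := by nlinarith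
    have h2 : 0 < (1 + ‖z‖ ^ 2) ^ (-((n : ℝ) + 2) / 2) := by positivity
    simp only [prof, neg_mul, neg_neg]
    positivity
  have h : 0 < ∫ z : Sp n, -prof z := by
    rw [integral_pos_iff_support_of_nonneg (fun z => (hpos z).le) integrable_prof.neg]
    rw [show Function.support (fun z : Sp n => -prof z) = univ from
      eq_univ_of_forall fun z => (hpos z).ne']
    exact Measure.measure_univ_pos.2 (NeZero.ne _)
  rw [integral_neg] at h
  unfold mass
  linarith

/-- The weak form of `Δ ‖y‖^{-(n-2)} = mass · δ₀`, obtained from the regularised kernels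
`(‖y‖² + ε²)^{-(n-2)/2}` as `ε → 0`. -/
lemma integral_newt_mul_lap (hn : 3 ≤ n) {h : Sp n → ℝ} (hh : Sm h) (hc : HasCompactSupport h) :
    ∫ y, newt y * lap h y = mass n * h 0 := by
  have := nontrivial_sp hn
  have hn' : (3 : ℝ) ≤ n := by exact_mod_cast hn
  obtain ⟨p, hp⟩ : ∃ p : ℝ, p = -((n : ℝ) - 2) / 2 := ⟨_, rfl⟩
  have hp0 : p ≤ 0 := by rw [hp]; linarith
  have hcl : HasCompactSupport (lap h) := by
    have : HasCompactSupport (fun y => ∑ i, pd i (pd i h) y) := by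
      refine HasCompactSupport.intro hc.isCompact fun y hy => Finset.sum_eq_zero fun i _ => ?_
      have h1 : tsupport (pd i (pd i h)) ⊆ tsupport h :=
        (tsupport_fderiv_apply_subset ℝ _).trans (tsupport_fderiv_apply_subset ℝ _)
      exact image_eq_zero_of_notMem_tsupport fun h2 => hy (h1 h2)
    exact this
  have hnewt : ∀ y : Sp n, y ≠ 0 → (‖y‖ ^ 2) ^ p = newt y := by
    intro y hy
    rw [newt, ← Real.rpow_natCast, ← Real.rpow_natCast, ← Real.rpow_neg (norm_nonneg _),
      ← Real.rpow_mul (norm_nonneg _), hp]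
    congr 1
    rw [Nat.cast_sub (by omega)]
    push_cast
    ring
  have lim1 : Tendsto (fun ε : ℝ => ∫ y, reg p (ε ^ 2) y * lap h y) (𝓝[>] 0)
      (𝓝 (∫ y, newt y * lap h y)) := by
    refine tendsto_integral_filter_of_dominated_convergence (fun y => newt y * ‖lap h y‖)
      ?_ ?_ ?_ ?_
    · filter_upwards [self_mem_nhdsWithin] with ε hε
      have hε0 : 0 < ε := hε
      exact ((sm_reg p (by positivity)).continuous.mul hh.lap.continuous).aestronglyMeasurable
    · filter_upwards [self_mem_nhdsWithin] with ε hε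
      have hε0 : 0 < ε := hε
      filter_upwards [Measure.ae_ne volume (0 : Sp n)] with y hy
      have hy0 : 0 < ‖y‖ := norm_pos_iff.2 hy
      have h0 : 0 ≤ reg p (ε ^ 2) y := by unfold reg; positivity
      rw [norm_mul, Real.norm_of_nonneg h0]
      refine mul_le_mul_of_nonneg_right ?_ (norm_nonneg _)
      rw [← hnewt y hy]
      exact Real.rpow_le_rpow_of_nonpos (by positivity) (by nlinarith) hp0
    · exact (locallyIntegrable_newt hn).integrable_smul_right_of_hasCompactSupport
        hh.lap.continuous.norm hcl.norm
    · filter_upwards [Measure.ae_ne volume (0 : Sp n)] with y hy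
      have hy0 : 0 < ‖y‖ := norm_pos_iff.2 hy
      refine Tendsto.mul_const _ ?_
      rw [← hnewt y hy]
      have h1 : ContinuousAt (fun ε : ℝ => (‖y‖ ^ 2 + ε ^ 2) ^ p) 0 :=
        ContinuousAt.rpow_const (by fun_prop) (Or.inl (by positivity))
      have h2 := h1.tendsto
      simp only [ne_eq, OfNat.ofNat_ne_zero, not_false_eq_true, zero_pow, add_zero] at h2
      exact h2.mono_left nhdsWithin_le_nhds
  have hscale : ∀ ε : ℝ, 0 < ε → ∫ y, reg p (ε ^ 2) y * lap h y = ∫ z, prof z * h (ε • z) := by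
    intro ε hε
    have hε2 : 0 < ε ^ 2 := by positivity
    rw [integral_mul_lap (sm_reg p hε2) hh hc]
    have h1 := Measure.integral_comp_smul (volume : Measure (Sp n))
      (fun y => lap (reg p (ε ^ 2)) y * h y) ε
    rw [finrank_euclideanSpace_fin, abs_of_pos (by positivity), smul_eq_mul] at h1
    have h2 : ∫ y, lap (reg p (ε ^ 2)) y * h y
        = ε ^ n * ∫ z, lap (reg p (ε ^ 2)) (ε • z) * h (ε • z) := by
      rw [h1]
      field_simp
    rw [h2, ← integral_const_mul]
    refine integral_congr_ae (Eventually.of_forall fun z => ?_)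
    simp only
    rw [lap_reg hp hε2, reg, prof, norm_smul, Real.norm_of_nonneg hε.le]
    have h3 : (ε * ‖z‖) ^ 2 + ε ^ 2 = ε ^ 2 * (1 + ‖z‖ ^ 2) := by ring
    have h4 : (ε ^ 2) ^ (p - 2) = (ε ^ n)⁻¹ * (ε ^ 2)⁻¹ := by
      rw [← Real.rpow_natCast ε 2, ← Real.rpow_mul hε.le, ← Real.rpow_natCast ε n,
        ← Real.rpow_neg hε.le, ← Real.rpow_neg hε.le, ← Real.rpow_add hε, hp]
      congr 1
      push_cast
      ring
    rw [h3, Real.mul_rpow hε2.le (by positivity), h4, hp,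
      show -((n : ℝ) - 2) / 2 - 2 = -((n : ℝ) + 2) / 2 by ring]
    field_simp
  have lim2 : Tendsto (fun ε : ℝ => ∫ z, prof z * h (ε • z)) (𝓝[>] 0) (𝓝 (mass n * h 0)) := by
    obtain ⟨C, hC⟩ := hh.continuous.bounded_above_of_compact_support hc
    rw [mass, ← integral_mul_const]
    refine tendsto_integral_filter_of_dominated_convergence (fun z => ‖prof z‖ * C) ?_ ?_ ?_ ?_
    · exact Eventually.of_forall fun ε => integrable_prof.aestronglyMeasurable.mul
        (hh.continuous.comp (by fun_prop : Continuous fun z : Sp n => ε • z)).aestronglyMeasurable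
    · refine Eventually.of_forall fun ε => Eventually.of_forall fun z => ?_
      rw [norm_mul]
      exact mul_le_mul_of_nonneg_left (hC _) (norm_nonneg _)
    · exact integrable_prof.norm.mul_const C
    · refine Eventually.of_forall fun z => Tendsto.const_mul _ ?_
      have h1 : ContinuousAt (fun ε : ℝ => h (ε • z)) 0 :=
        (hh.continuous.comp (by fun_prop : Continuous fun ε : ℝ => ε • z)).continuousAt
      have h2 := h1.tendsto
      simp only [zero_smul] at h2
      exact h2.mono_left nhdsWithin_le_nhds
  refine tendsto_nhds_unique lim1 (lim2.congr' ?_)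
  filter_upwards [self_mem_nhdsWithin] with ε hε
  exact (hscale ε hε).symm

/-- Poisson's equation for the Newton potential. -/
lemma lap_pot (hn : 3 ≤ n) {g : Sp n → ℝ} (hg : Sm g) (hc : HasCompactSupport g) :
    lap (pot g) = fun x => mass n * g x := by
  ext x
  set h : Sp n → ℝ := fun y => g (x - y) with hh_def
  have hh : Sm h := hg.comp (contDiff_const.sub contDiff_id)
  have hch : HasCompactSupport h := hc.comp_homeomorph (Homeomorph.subLeft x)
  have hpd : ∀ (i : Fin n) {v : Sp n → ℝ}, Sm v →
      pd i (fun y => v (x - y)) = fun y => -1 * pd i v (x - y) := by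
    intro i v hv
    ext y
    have h1 : HasFDerivAt (fun y : Sp n => x - y) (-(ContinuousLinearMap.id ℝ (Sp n))) y :=
      (hasFDerivAt_id y).const_sub x
    have h2 := (hv.diff (x - y)).hasFDerivAt.comp y h1
    rw [pd, show (fun y => v (x - y)) = v ∘ (fun y => x - y) from rfl, h2.fderiv]
    simp [pd]
  have hl : ∀ y, lap h y = ∑ i, pd i (pd i g) (x - y) := by
    intro y
    refine Finset.sum_congr rfl fun i _ => ?_
    have hs : Sm (fun y => pd i g (x - y)) := (hg.pd i).comp (contDiff_const.sub contDiff_id)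
    rw [hh_def, hpd i hg, pd_smul hs, hpd i (hg.pd i)]
    simp
  have h0 := integral_newt_mul_lap hn hh hch
  simp only [hl, Finset.mul_sum] at h0
  rw [integral_finsetSum] at h0
  · simp only [hh_def, sub_zero] at h0
    rw [← h0]
    refine Finset.sum_congr rfl fun i _ => ?_
    rw [pd_pot hn hg hc, pd_pot hn (hg.pd i) (hasCompactSupport_pd hc i), pot_apply]
  · intro i _
    exact (locallyIntegrable_newt hn).integrable_smul_right_of_hasCompactSupport
      (((hg.pd i).pd i).continuous.comp (by fun_prop))
      ((hasCompactSupport_pd (hasCompactSupport_pd hc i) i).comp_homeomorph (Homeomorph.subLeft x))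

/-! ### Decay of Newton potentials -/

/-- Decay at the rate `‖x‖^{-(n-2)}` of the Newton kernel. -/
def Dec (F : Sp n → ℝ) : Prop :=
  ∃ C : ℝ, ∀ x, |F x| ≤ C * (1 + ‖x‖ ^ 2) ^ (-((n : ℝ) - 2) / 2)

lemma Dec.add {F G : Sp n → ℝ} (hF : Dec F) (hG : Dec G) : Dec (fun x => F x + G x) := by
  obtain ⟨C, hC⟩ := hF
  obtain ⟨D, hD⟩ := hG
  refine ⟨C + D, fun x => (abs_add_le _ _).trans ?_⟩
  rw [add_mul]
  exact add_le_add (hC x) (hD x)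

lemma Dec.const_mul {F : Sp n → ℝ} (hF : Dec F) (c : ℝ) : Dec (fun x => c * F x) := by
  obtain ⟨C, hC⟩ := hF
  refine ⟨|c| * C, fun x => ?_⟩
  rw [abs_mul, mul_assoc]
  exact mul_le_mul_of_nonneg_left (hC x) (abs_nonneg _)

lemma Dec.sub {F G : Sp n → ℝ} (hF : Dec F) (hG : Dec G) : Dec (fun x => F x - G x) := by
  simpa [sub_eq_add_neg] using hF.add (hG.const_mul (-1))

lemma dec_zero : Dec (fun _ : Sp n => (0 : ℝ)) := ⟨0, fun x => by simp⟩

lemma Dec.sum {ι : Type*} (s : Finset ι) {F : ι → Sp n → ℝ} (hF : ∀ i, Dec (F i)) :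
    Dec (fun x => ∑ i ∈ s, F i x) := by
  classical
  induction s using Finset.induction_on with
  | empty => simpa using dec_zero
  | insert a s ha ih =>
    simp only [Finset.sum_insert ha]
    exact (hF a).add ih

lemma dec_of_large (hn : 3 ≤ n) {F : Sp n → ℝ} (hF : Continuous F) {C R : ℝ}
    (hC : ∀ x, R ≤ ‖x‖ → |F x| ≤ C * (‖x‖ ^ (n - 2))⁻¹) : Dec F := by
  have hn' : (3 : ℝ) ≤ n := by exact_mod_cast hn
  obtain ⟨p, hp⟩ : ∃ p : ℝ, p = -((n : ℝ) - 2) / 2 := ⟨_, rfl⟩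
  have hp0 : p ≤ 0 := by rw [hp]; linarith
  set W : Sp n → ℝ := fun x => (1 + ‖x‖ ^ 2) ^ p with hW
  have hWpos : ∀ x, 0 < W x := fun x => by positivity
  have hWc : Continuous W :=
    Continuous.rpow_const (by fun_prop) fun x => Or.inl (by positivity)
  obtain ⟨D, hD⟩ := (isCompact_closedBall (0 : Sp n) (max R 1)).exists_bound_of_continuousOn
    (hF.div hWc fun x => (hWpos x).ne').continuousOn
  refine ⟨max D (|C| * 2 ^ (-p)), fun x => ?_⟩
  rw [← hp]
  change |F x| ≤ _ * W x
  by_cases hx : x ∈ Metric.closedBall (0 : Sp n) (max R 1)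
  · have h1 := hD x hx
    rw [Pi.div_apply, norm_div, Real.norm_eq_abs, Real.norm_of_nonneg (hWpos x).le,
      div_le_iff₀ (hWpos x)] at h1
    exact h1.trans (mul_le_mul_of_nonneg_right (le_max_left _ _) (hWpos x).le)
  · have h1 : max R 1 < ‖x‖ := by simpa using hx
    have hR : R ≤ ‖x‖ := (le_max_left _ _).trans h1.le
    have h1x : 1 < ‖x‖ := (le_max_right _ _).trans_lt h1
    have hx0 : 0 < ‖x‖ := by linarith
    have h2 : (‖x‖ ^ (n - 2))⁻¹ = (‖x‖ ^ 2) ^ p := by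
      rw [← Real.rpow_natCast, ← Real.rpow_natCast, ← Real.rpow_neg (norm_nonneg _),
        ← Real.rpow_mul (norm_nonneg _), hp]
      congr 1
      rw [Nat.cast_sub (by omega)]
      push_cast
      ring
    have h3 : (‖x‖ ^ 2) ^ p ≤ 2 ^ (-p) * W x := by
      have h4 : (2 * ‖x‖ ^ 2) ^ p ≤ W x :=
        Real.rpow_le_rpow_of_nonpos (by positivity) (by nlinarith) hp0
      rw [Real.mul_rpow (by norm_num) (by positivity)] at h4
      have h5 : (2 : ℝ) ^ (-p) * 2 ^ p = 1 := by
        rw [← Real.rpow_add (by norm_num)]; simp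
      calc (‖x‖ ^ 2) ^ p = 2 ^ (-p) * (2 ^ p * (‖x‖ ^ 2) ^ p) := by
            rw [← mul_assoc, h5, one_mul]
        _ ≤ _ := mul_le_mul_of_nonneg_left h4 (by positivity)
    calc |F x| ≤ C * (‖x‖ ^ (n - 2))⁻¹ := hC x hR
      _ ≤ |C| * (2 ^ (-p) * W x) := by
          rw [h2]
          exact mul_le_mul (le_abs_self C) h3 (by positivity) (abs_nonneg _)
      _ = |C| * 2 ^ (-p) * W x := by ring
      _ ≤ _ := mul_le_mul_of_nonneg_right (le_max_right _ _) (hWpos x).le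

lemma pot_apply' (g : Sp n → ℝ) (x : Sp n) : pot g x = ∫ y, newt (x - y) * g y := by
  rw [pot_apply, ← integral_sub_left_eq_self (fun y => newt (x - y) * g y) volume x]
  simp

lemma exists_support_radius {g : Sp n → ℝ} (hc : HasCompactSupport g) :
    ∃ ρ : ℝ, 1 ≤ ρ ∧ ∀ y, g y ≠ 0 → ‖y‖ ≤ ρ := by
  obtain ⟨r, hr⟩ := hc.isCompact.isBounded.subset_closedBall (0 : Sp n)
  refine ⟨max r 1, le_max_right _ _, fun y hy => (le_max_left r 1).trans' ?_⟩
  simpa using hr (subset_tsupport g hy)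

lemma dec_pot (hn : 3 ≤ n) {g : Sp n → ℝ} (hg : Sm g) (hc : HasCompactSupport g) :
    Dec (pot g) := by
  obtain ⟨ρ, hρ1, hρ⟩ := exists_support_radius hc
  refine dec_of_large hn (sm_pot hn hg hc).continuous (R := 2 * ρ)
    (C := 2 ^ (n - 2) * ∫ y, ‖g y‖) fun x hx => ?_
  have hx0 : 0 < ‖x‖ := by linarith
  have hgi : Integrable g := hg.continuous.integrable_of_hasCompactSupport hc
  have hb : ∀ y, ‖newt (x - y) * g y‖ ≤ 2 ^ (n - 2) * (‖x‖ ^ (n - 2))⁻¹ * ‖g y‖ := by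
    intro y
    by_cases hy : g y = 0
    · simp [hy]
    have h1 := hρ y hy
    have h2 : ‖x‖ / 2 ≤ ‖x - y‖ := by
      have := norm_sub_norm_le x y
      linarith
    rw [norm_mul, Real.norm_of_nonneg (newt_nonneg _)]
    refine mul_le_mul_of_nonneg_right ?_ (norm_nonneg _)
    rw [newt, ← div_eq_mul_inv, ← inv_div, ← div_pow]
    gcongr
  rw [pot_apply', ← Real.norm_eq_abs]
  refine (norm_integral_le_of_norm_le (hgi.norm.const_mul _)
    (Eventually.of_forall hb)).trans (le_of_eq ?_)
  rw [integral_const_mul]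
  ring

/-- The difference of two values of the Newton kernel gains one order of decay. -/
lemma abs_newt_sub_le (hn : 3 ≤ n) {x y : Sp n} (hx : 0 < ‖x‖) (hy : 2 * ‖y‖ ≤ ‖x‖) :
    ‖x‖ * |newt (x - y) - newt x| ≤
      (n - 2 : ℕ) * 2 ^ (2 * n) * ‖y‖ * (‖x‖ ^ (n - 2))⁻¹ := by
  obtain ⟨m, rfl⟩ : ∃ m, n = m + 3 := ⟨n - 3, by omega⟩
  simp only [newt, show m + 3 - 2 = m + 1 by omega]
  set a := ‖x - y‖ with ha
  set b := ‖x‖ with hb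
  have hab : |b - a| ≤ ‖y‖ := by
    have := abs_norm_sub_norm_le x (x - y)
    simpa using this
  have hab' := abs_le.1 hab
  have ha1 : b / 2 ≤ a := by linarith
  have ha2 : a ≤ 2 * b := by linarith
  have ha0 : 0 < a := by linarith
  have h1 : |b ^ (m + 1) - a ^ (m + 1)| ≤ ‖y‖ * (m + 1 : ℕ) * (2 * b) ^ m := by
    refine (abs_pow_sub_pow_le b a (m + 1)).trans ?_
    rw [abs_of_pos ha0, abs_of_pos hx, Nat.add_sub_cancel]
    gcongr
    exact max_le (by linarith) ha2
  have h2 : (a ^ (m + 1))⁻¹ - (b ^ (m + 1))⁻¹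
      = (b ^ (m + 1) - a ^ (m + 1)) * ((a ^ (m + 1))⁻¹ * (b ^ (m + 1))⁻¹) := by
    field_simp
  have h3 : (a ^ (m + 1))⁻¹ ≤ ((b / 2) ^ (m + 1))⁻¹ := by gcongr
  rw [h2, abs_mul, abs_of_pos (a := (a ^ (m + 1))⁻¹ * (b ^ (m + 1))⁻¹) (by positivity)]
  calc b * (|b ^ (m + 1) - a ^ (m + 1)| * ((a ^ (m + 1))⁻¹ * (b ^ (m + 1))⁻¹))
      ≤ b * (‖y‖ * (m + 1 : ℕ) * (2 * b) ^ m * (((b / 2) ^ (m + 1))⁻¹ * (b ^ (m + 1))⁻¹)) := by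
        gcongr
    _ = (m + 1 : ℕ) * 2 ^ (2 * m + 1) * ‖y‖ * (b ^ (m + 1))⁻¹ := by
        rw [mul_pow, div_pow]
        field_simp
        ring
    _ ≤ _ := by
        gcongr
        · norm_num
        · omega

/-- The potential of a derivative decays one order faster, since a derivative has mean zero. -/
lemma dec_coord_mul_pot_pd (hn : 3 ≤ n) {g : Sp n → ℝ} (hg : Sm g) (hc : HasCompactSupport g)
    (i j : Fin n) : Dec (fun x => x j * pot (pd i g) x) := by
  obtain ⟨ρ, hρ1, hρ⟩ := exists_support_radius (hasCompactSupport_pd hc i)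
  have hsg := hg.pd i
  have hcg := hasCompactSupport_pd hc i
  have hgi : Integrable (pd i g) := hsg.continuous.integrable_of_hasCompactSupport hcg
  have hmean : ∫ y, pd i g y = 0 := by
    have := integral_mul_pd (f := fun _ : Sp n => (1 : ℝ)) contDiff_const (hg.of_le (by simp)) hc i
    simpa [pd_const] using this
  refine dec_of_large hn ((sm_coord j).continuous.mul (sm_pot hn hsg hcg).continuous) (R := 2 * ρ)
    (C := (n - 2 : ℕ) * 2 ^ (2 * n) * ρ * ∫ y, ‖pd i g y‖) fun x hx => ?_
  have hx0 : 0 < ‖x‖ := by linarith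
  have hN : Integrable (fun y => newt (x - y) * pd i g y) := by
    have := (locallyIntegrable_newt hn).integrable_smul_right_of_hasCompactSupport
      (g := fun y => pd i g (x - y)) (hsg.continuous.comp (by fun_prop))
      (hcg.comp_homeomorph (Homeomorph.subLeft x))
    simpa using this.comp_sub_left x
  have he : x j * pot (pd i g) x = ∫ y, x j * ((newt (x - y) - newt x) * pd i g y) := by
    rw [integral_const_mul, pot_apply']
    congr 1
    simp only [sub_mul]
    rw [integral_sub hN (hgi.const_mul _), integral_const_mul, hmean]
    ring
  have hb : ∀ y, ‖x j * ((newt (x - y) - newt x) * pd i g y)‖ ≤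
      (n - 2 : ℕ) * 2 ^ (2 * n) * ρ * (‖x‖ ^ (n - 2))⁻¹ * ‖pd i g y‖ := by
    intro y
    by_cases hy : pd i g y = 0
    · simp [hy]
    have h1 := hρ y hy
    rw [← mul_assoc, norm_mul, norm_mul]
    refine mul_le_mul_of_nonneg_right ?_ (norm_nonneg _)
    calc ‖x j‖ * ‖newt (x - y) - newt x‖ ≤ ‖x‖ * |newt (x - y) - newt x| :=
          mul_le_mul_of_nonneg_right (PiLp.norm_apply_le x j) (norm_nonneg _)
      _ ≤ _ := abs_newt_sub_le hn hx0 (by linarith)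
      _ ≤ _ := by gcongr
  rw [he, ← Real.norm_eq_abs]
  refine (norm_integral_le_of_norm_le (hgi.norm.const_mul _)
    (Eventually.of_forall hb)).trans (le_of_eq ?_)
  rw [integral_const_mul]
  ring

/-! ### Solving `Δ_conf Y = f` -/

/-- The stream function `∑ⱼ (xⱼ · pot fⱼ - pot (yⱼ fⱼ))`, whose Laplacian is `2 div (pot f)`. -/
noncomputable def strm (g : Fin n → Sp n → ℝ) : Sp n → ℝ :=
  fun x => ∑ j, (x j * pot (g j) x - pot (fun y => y j * g j y) x)

section

variable {g : Fin n → Sp n → ℝ}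

lemma sm_strm (hn : 3 ≤ n) (hg : ∀ j, Sm (g j)) (hc : ∀ j, HasCompactSupport (g j)) :
    Sm (strm g) :=
  ContDiff.sum fun j _ => ((sm_coord j).mul (sm_pot hn (hg j) (hc j))).sub
    (sm_pot hn ((sm_coord j).mul (hg j)) (hc j).mul_left)

lemma lap_strm (hn : 3 ≤ n) (hg : ∀ j, Sm (g j)) (hc : ∀ j, HasCompactSupport (g j)) :
    lap (strm g) = fun x => 2 * ∑ j, pd j (pot (g j)) x := by
  have hU := fun j => sm_pot hn (hg j) (hc j)
  have hV := fun j => sm_pot hn ((sm_coord j).mul (hg j)) (hc j).mul_left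
  have h1 := lap_sum (s := Finset.univ) fun j => ((sm_coord j).mul (hU j)).sub (hV j)
  change lap (strm g) = _ at h1
  rw [h1]
  ext x
  rw [Finset.mul_sum]
  refine Finset.sum_congr rfl fun j _ => ?_
  rw [lap_sub ((sm_coord j).mul (hU j)) (hV j), lap_coord_mul (hU j), lap_pot hn (hg j) (hc j),
    lap_pot hn ((sm_coord j).mul (hg j)) (hc j).mul_left]
  ring

lemma dec_pd_strm (hn : 3 ≤ n) (hg : ∀ j, Sm (g j)) (hc : ∀ j, HasCompactSupport (g j))
    (i : Fin n) : Dec (pd i (strm g)) := by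
  have hU := fun j => sm_pot hn (hg j) (hc j)
  have hW := fun j => (sm_coord j).mul (hg j)
  have hV := fun j => sm_pot hn (hW j) (hc j).mul_left
  have h1 := pd_sum (s := Finset.univ) (fun j => ((sm_coord j).mul (hU j)).sub (hV j)) i
  change pd i (strm g) = _ at h1
  rw [h1]
  refine Dec.sum _ fun j => ?_
  rw [pd_sub ((sm_coord j).mul (hU j)) (hV j), pd_mul (sm_coord j) (hU j), pd_coord,
    pd_pot hn (hg j) (hc j), pd_pot hn (hW j) (hc j).mul_left]
  exact ((dec_coord_mul_pot_pd hn (hg j) (hc j) i j).add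
    ((dec_pot hn (hg j) (hc j)).const_mul _)).sub
    (dec_pot hn (Sm.pd (hW j) i) (hasCompactSupport_pd (hc j).mul_left i))

/-- The components of the solution: the Newton potential of `f` corrected by a gradient, so that
`Δ Y + (1 - 2/n) ∇ div Y = f`. With `α = 1 - 2/n`, the coefficient is `β = α / (1 + α)`, the
solution of `α (1 - β) = β`. -/
noncomputable def sol (g : Fin n → Sp n → ℝ) (i : Fin n) : Sp n → ℝ :=
  fun x => (mass n)⁻¹ * (pot (g i) x
    - (1 - 2 / (n : ℝ)) / (1 + (1 - 2 / (n : ℝ))) / 2 * pd i (strm g) x)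

lemma sm_sol (hn : 3 ≤ n) (hg : ∀ j, Sm (g j)) (hc : ∀ j, HasCompactSupport (g j)) (i : Fin n) :
    Sm (sol g i) :=
  contDiff_const.mul ((sm_pot hn (hg i) (hc i)).sub
    (contDiff_const.mul ((sm_strm hn hg hc).pd i)))

lemma dec_sol (hn : 3 ≤ n) (hg : ∀ j, Sm (g j)) (hc : ∀ j, HasCompactSupport (g j)) (i : Fin n) :
    Dec (sol g i) :=
  ((dec_pot hn (hg i) (hc i)).sub ((dec_pd_strm hn hg hc i).const_mul _)).const_mul _

lemma sol_eq (hn : 3 ≤ n) (hg : ∀ j, Sm (g j)) (hc : ∀ j, HasCompactSupport (g j)) (k : Fin n)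
    (x : Sp n) :
    lap (sol g k) x + (1 - 2 / (n : ℝ)) * pd k (fun y => ∑ l, pd l (sol g l) y) x = g k x := by
  have hn' : (3 : ℝ) ≤ n := by exact_mod_cast hn
  have hU := fun j => sm_pot hn (hg j) (hc j)
  have hS := sm_strm hn hg hc
  have hm := mass_ne_zero hn
  set α : ℝ := 1 - 2 / (n : ℝ) with hα
  have hα1 : 1 + α ≠ 0 := by
    have : 2 / (n : ℝ) < 1 := by rw [div_lt_one (by linarith)]; linarith
    rw [hα]
    linarith
  set β : ℝ := α / (1 + α) / 2 with hβ
  set d : Sp n → ℝ := fun y => ∑ l, pd l (pot (g l)) y with hd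
  have hds : Sm d := ContDiff.sum fun l _ => (hU l).pd l
  have hlS : lap (strm g) = fun x => 2 * d x := lap_strm hn hg hc
  have e1 : lap (sol g k) x = (mass n)⁻¹ * (mass n * g k x - β * (2 * pd k d x)) := by
    have hb : Sm (fun x => β * pd k (strm g) x) := contDiff_const.mul (hS.pd k)
    change lap (fun x => (mass n)⁻¹ * (pot (g k) x - β * pd k (strm g) x)) x = _
    rw [lap_smul ((hU k).sub hb), lap_sub (hU k) hb, lap_smul (hS.pd k), lap_pd hS, hlS,
      pd_smul hds, lap_pot hn (hg k) (hc k)]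
  have e2 : (fun y => ∑ l, pd l (sol g l) y) = fun y => (mass n)⁻¹ * (1 - 2 * β) * d y := by
    ext y
    have h1 : ∀ l, pd l (sol g l) y
        = (mass n)⁻¹ * (pd l (pot (g l)) y - β * pd l (pd l (strm g)) y) := by
      intro l
      have hb : Sm (fun x => β * pd l (strm g) x) := contDiff_const.mul (hS.pd l)
      change pd l (fun x => (mass n)⁻¹ * (pot (g l) x - β * pd l (strm g) x)) y = _
      rw [pd_smul ((hU l).sub hb), pd_sub (hU l) hb, pd_smul (hS.pd l)]
    simp only [h1, ← Finset.mul_sum, Finset.sum_sub_distrib]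
    change _ * (d y - β * lap (strm g) y) = _
    rw [hlS]
    ring
  rw [e1, e2, pd_smul hds, hβ]
  field_simp
  ring

end

/-- Decay at the rate of the Newton kernel is square-integrable for the weights with
`δ < n/2 - 2`. -/
lemma integrable_of_dec {δ : ℝ} (hδ : δ < (n : ℝ) / 2 - 2) {Y : Sp n → Sp n} (hY : Continuous Y)
    (hd : ∀ i, Dec (fun x => Y x i)) :
    Integrable (fun x => ‖Y x‖ ^ 2 * (1 + ‖x‖ ^ 2) ^ δ) := by
  choose C hC using hd
  have hw : Continuous (fun x : Sp n => (1 + ‖x‖ ^ 2) ^ δ) :=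
    Continuous.rpow_const (by fun_prop) fun x => Or.inl (by positivity)
  have hi : Integrable (fun x : Sp n => (1 + ‖x‖ ^ 2) ^ (-(2 * ((n : ℝ) - 2 - δ)) / 2)) :=
    integrable_rpow_neg_one_add_norm_sq (by rw [finrank_euclideanSpace_fin]; linarith)
  refine (hi.const_mul (∑ i, C i ^ 2)).mono' ((hY.norm.pow 2).mul hw).aestronglyMeasurable
    (Eventually.of_forall fun x => ?_)
  have hx : 0 < 1 + ‖x‖ ^ 2 := by positivity
  rw [Real.norm_of_nonneg (by positivity), EuclideanSpace.norm_sq_eq,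
    show -(2 * ((n : ℝ) - 2 - δ)) / 2
      = -((n : ℝ) - 2) / 2 + -((n : ℝ) - 2) / 2 + δ by ring,
    Real.rpow_add hx, Real.rpow_add hx, ← mul_assoc]
  refine mul_le_mul_of_nonneg_right ?_ (by positivity)
  rw [Finset.sum_mul]
  refine Finset.sum_le_sum fun i _ => ?_
  have h := pow_le_pow_left₀ (abs_nonneg _) (hC i x) 2
  rw [Real.norm_eq_abs]
  refine h.trans (le_of_eq ?_)
  ring

lemma exists_sol (hn : 3 ≤ n) {δ : ℝ} (hδ : δ < (n : ℝ) / 2 - 2) {f : Sp n → Sp n}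
    (hf : ContDiff ℝ (⊤ : ℕ∞) f) (hc : HasCompactSupport f) :
    ∃ Y : Sp n → Sp n, ContDiff ℝ (⊤ : ℕ∞) Y ∧
      Integrable (fun x => ‖Y x‖ ^ 2 * (1 + ‖x‖ ^ 2) ^ δ) ∧ ∀ x k, confLap n Y x k = f x k := by
  set g : Fin n → Sp n → ℝ := fun j x => f x j with hg_def
  have hg : ∀ j, Sm (g j) := sm_comp hf
  have hcg : ∀ j, HasCompactSupport (g j) := fun j =>
    hc.comp_left (g := fun v : Sp n => v j) (by simp)
  have hY : ContDiff ℝ (⊤ : ℕ∞) (fun x => WithLp.toLp 2 (fun i => sol g i x) : Sp n → Sp n) :=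
    contDiff_euclidean.2 fun i => sm_sol hn hg hcg i
  refine ⟨_, hY, integrable_of_dec hδ hY.continuous fun i => dec_sol hn hg hcg i, fun x k => ?_⟩
  rw [confLap_eq hY]
  exact sol_eq hn hg hcg k x

lemma confLap_sub {Y Z : Sp n → Sp n} (hY : ContDiff ℝ (⊤ : ℕ∞) Y)
    (hZ : ContDiff ℝ (⊤ : ℕ∞) Z) (x : Sp n) (k : Fin n) :
    confLap n (fun x => Y x - Z x) x k = confLap n Y x k - confLap n Z x k := by
  have hs := sm_comp hY
  have ht := sm_comp hZ
  rw [confLap_eq (hY.sub hZ), confLap_eq hY, confLap_eq hZ]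
  simp only [PiLp.sub_apply]
  have hd : (fun y => ∑ l, pd l (fun z => Y z l - Z z l) y)
      = fun y => (∑ l, pd l (fun z => Y z l) y) - ∑ l, pd l (fun z => Z z l) y := by
    ext y
    rw [← Finset.sum_sub_distrib]
    refine Finset.sum_congr rfl fun l _ => ?_
    rw [pd_sub (hs l) (ht l)]
  rw [hd, lap_sub (hs k) (ht k), pd_sub (ContDiff.sum fun l _ => (hs l).pd l)
    (ContDiff.sum fun l _ => (ht l).pd l)]
  ring

lemma integrable_sub {δ : ℝ} {Y Z : Sp n → Sp n} (hY : Continuous Y) (hZ : Continuous Z)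
    (iY : Integrable (fun x => ‖Y x‖ ^ 2 * (1 + ‖x‖ ^ 2) ^ δ))
    (iZ : Integrable (fun x => ‖Z x‖ ^ 2 * (1 + ‖x‖ ^ 2) ^ δ)) :
    Integrable (fun x => ‖Y x - Z x‖ ^ 2 * (1 + ‖x‖ ^ 2) ^ δ) := by
  have hw : Continuous (fun x : Sp n => (1 + ‖x‖ ^ 2) ^ δ) :=
    Continuous.rpow_const (by fun_prop) fun x => Or.inl (by positivity)
  refine ((iY.add iZ).const_mul 2).mono'
    (((hY.sub hZ).norm.pow 2).mul hw).aestronglyMeasurable (Eventually.of_forall fun x => ?_)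
  rw [Real.norm_of_nonneg (by positivity), Pi.add_apply, ← add_mul, ← mul_assoc]
  refine mul_le_mul_of_nonneg_right ?_ (by positivity)
  have h := norm_sub_le (Y x) (Z x)
  nlinarith [sq_nonneg (‖Y x‖ - ‖Z x‖), norm_nonneg (Y x - Z x)]

end ConfLap

/-- Flat-background isomorphism theorem for the conformal vector Laplacian on `ℝⁿ`,
`n ≥ 3`, `-n/2 < δ < n/2 - 2`:
(a) a smooth vector field `Y`, square-integrable with weight `(1+‖x‖²)^δ` and
satisfying `Δ_conf Y = 0`, vanishes identically;
(b) for every smooth compactly supported vector field `f` there is a unique smooth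
vector field `Y`, square-integrable with weight `(1+‖x‖²)^δ`, with `Δ_conf Y = f`. -/
theorem conformal_laplacian_isomorphism (n : ℕ) (hn : 3 ≤ n) (δ : ℝ)
    (hδ1 : -(n : ℝ) / 2 < δ) (hδ2 : δ < (n : ℝ) / 2 - 2) :
    (∀ Y : EuclideanSpace ℝ (Fin n) → EuclideanSpace ℝ (Fin n),
      ContDiff ℝ (⊤ : ℕ∞) Y →
      Integrable (fun x : EuclideanSpace ℝ (Fin n) =>
        ‖Y x‖ ^ 2 * (1 + ‖x‖ ^ 2) ^ δ) →
      (∀ x k, confLap n Y x k = 0) → ∀ x, Y x = 0) ∧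
    (∀ f : EuclideanSpace ℝ (Fin n) → EuclideanSpace ℝ (Fin n),
      ContDiff ℝ (⊤ : ℕ∞) f → HasCompactSupport f →
      ∃! Y : EuclideanSpace ℝ (Fin n) → EuclideanSpace ℝ (Fin n),
        ContDiff ℝ (⊤ : ℕ∞) Y ∧
        Integrable (fun x : EuclideanSpace ℝ (Fin n) =>
          ‖Y x‖ ^ 2 * (1 + ‖x‖ ^ 2) ^ δ) ∧
        ∀ x k, confLap n Y x k = f x k) := by
  refine ⟨fun Y hY hi h0 x => ConfLap.eq_zero_of_confLap_eq_zero hn hδ1 hY hi h0 x,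
    fun f hf hc => ?_⟩
  obtain ⟨Y, hY, iY, eY⟩ := ConfLap.exists_sol hn hδ2 hf hc
  refine ⟨Y, ⟨hY, iY, eY⟩, ?_⟩
  rintro Z ⟨hZ, iZ, eZ⟩
  funext x
  refine sub_eq_zero.1 (ConfLap.eq_zero_of_confLap_eq_zero hn hδ1 (hZ.sub hY)
    (ConfLap.integrable_sub hZ.continuous hY.continuous iZ iY) (fun x k => ?_) x)
  rw [ConfLap.confLap_sub hZ hY, eZ, eY, sub_self]
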